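/- arXiv:math/9902109 — 2 statements merged into one kernel-verified Lean document; each statement's English description precedes it below -/
import Mathlib

section
/- Littlewood–Richardson rule in integral-matrix form: let λ = (λ₁ ≥ … ≥ λ_m ≥ 0) and μ = (μ₁ ≥ … ≥ μ_n ≥ 0) be partitions. Then s_λ · s_μ = ∑_{M,N} C_{M,N} · s_{(λ+M, μ−N)}, where the sum ranges over all pairs M ∈ ℕ^m, N ∈ ℕ^n, C_{M,N} is the number of m×n matrices with nonnegative integer entries whose i-th row sums to M_i and whose j-th column sums to N_j, and (λ+M, μ−N) ∈ ℤ^{m+n} is the juxtaposed tuple (λ₁+M₁, …, λ_m+M_m, μ₁−N₁, …, μ_n−N_n). All but finitely many summands vanish; in fact every summand with N_j > μ_j + n − j for some j is zero. -/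
/-!
Jacobi–Trudi determinants `s_ρ = det (h_{ρ_i - i + j})` are treated umbrally: with `U` the linear
functional `x^a ↦ ∏ h_{a_i}` on Laurent polynomials and `V` the Vandermonde determinant,
`s_ρ = U (x^{ρ-δ} V(x))`, where `δ = (0, 1, 2, …)`. For two blocks of variables,
`Q_{λμ} = x^{λ-δ} y^{μ-δ} V(x) V(y)` satisfies `U (Q_{λμ}) = s_λ s_μ`, and since
`V(x, y) = V(x) V(y) ∏ (y_j - x_i)`, the tuple `(λ, μ)` has
`s_{(λ, μ)} = U (Q_{λμ} ∏ (1 - r_{ij}))` with `r_{ij} = x_i / y_j`. Multiplication by `r_{ij}` is a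
raising operator: it replaces `λ_i, μ_j` by `λ_i + 1, μ_j - 1`. So the finite geometric series turns
the sum of the `s_{(λ+M, μ-N)}` over the matrices with entries less than `K` into
`U (Q_{λμ} ∏ (1 - r_{ij}^K))`. For large `K` the terms of this product containing some `r_{ij}^K`
contribute zero, because `s_{μ-N}` has a zero row once `N_j` is large; the same vanishing removes
all matrices with larger entries.
-/

open MvPolynomial

noncomputable section

/-- The ring of symmetric functions `Λ = ℚ[p₁,p₂,…]`, with the variable `X n`
(for `n : ℕ+`) playing the role of the power sum `p_n`. -/
abbrev Lam : Type := MvPolynomial ℕ+ ℚ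

/-- The power sum `p_n`. -/
def pp (n : ℕ+) : Lam := X n

/-- The family `g` with generating function `∑_k g_k t^k = exp (∑_{n≥1} c n · p_n tⁿ / n)`,
characterized by `g 0 = 1` together with the recursion obtained by differentiating the
generating function:  `(k+1) · g (k+1) = ∑_{i=0}^{k} c (i+1) · p_{i+1} · g (k-i)`. -/
def genFam (c : ℕ → ℚ) : ℕ → Lam
  | 0 => 1
  | (k+1) => (((k : ℚ) + 1)⁻¹) •
      ∑ i ∈ Finset.range (k+1), c (i+1) • (pp ⟨i+1, Nat.succ_pos i⟩ * genFam c (k - i))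
  decreasing_by exact Nat.lt_succ_of_le (Nat.sub_le k i)

/-- The complete homogeneous symmetric function `h_k`,
with generating function `exp (∑ p_n tⁿ/n)`. -/
def hh : ℕ → Lam := genFam fun _ => 1

/-- The elementary symmetric function `e_k`,
with generating function `exp (∑ (−1)^{n−1} p_n tⁿ/n)`. -/
def ee : ℕ → Lam := genFam fun n => (-1)^(n+1)

/-- `h` indexed by `ℤ` (zero for negative indices). -/
def hZ (n : ℤ) : Lam := if 0 ≤ n then hh n.toNat else 0

/-- `e` indexed by `ℤ` (zero for negative indices). -/
def eZ (n : ℤ) : Lam := if 0 ≤ n then ee n.toNat else 0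

/-- The differential operator `∏_i (i·∂/∂p_i)^(α i)` (the factors commute,
so the sorted product is the canonical one). -/
def monOp (α : ℕ+ →₀ ℕ) : Module.End ℚ Lam :=
  ((α.support.sort (· ≤ ·)).map fun (i : ℕ+) => (((i : ℕ) : ℚ) • (pderiv i).toLinearMap) ^ (α i)).prod

/-- `f(∂) P`: substitute `p_i ↦ i·∂/∂p_i` in `f` and apply the result to `P`. -/
def Dop (f : Lam) (P : Lam) : Lam := ∑ α ∈ f.support, f.coeff α • monOp α P

/-- A bound for the weighted degree (`p_i` of weight `i`) of `P`;
`e_j(∂) P = 0 = h_j(∂) P` whenever `j > wbound P`. -/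
def wbound (P : Lam) : ℕ := P.support.sup fun α => α.sum fun i k => (i : ℕ) * k

/-- The vertex operator component `S_n = ∑_{j ≥ max(0,n)} (−1)^j h_{j−n} · e_j(∂)`;
on a given polynomial only the (finitely many) terms with `j ≤ wbound P` act nontrivially. -/
def Sop (n : ℤ) (P : Lam) : Lam :=
  ∑ j ∈ Finset.range (wbound P + 1),
    if n ≤ (j : ℤ) then ((-1 : ℚ)) ^ j • (hZ ((j : ℤ) - n) * Dop (ee j) P) else 0

/-- The dual vertex operator component `S*_n = ∑_{j ≥ max(0,−n)} (−1)^{j+n} e_{j+n} · h_j(∂)`. -/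
def SstarOp (n : ℤ) (P : Lam) : Lam :=
  ∑ j ∈ Finset.range (wbound P + 1),
    if -n ≤ (j : ℤ) then ((-1 : ℚ)) ^ ((j : ℤ) + n) • (eZ ((j : ℤ) + n) * Dop (hh j) P) else 0

/-- The Schur function of an arbitrary integer tuple, via the Jacobi–Trudi determinant
`s_ρ = det (h_{ρ_i − i + j})`. -/
def schur {l : ℕ} (ρ : Fin l → ℤ) : Lam :=
  (Matrix.of fun i j : Fin l => hZ (ρ i - (i.1 : ℤ) + (j.1 : ℤ))).det

/-- The dual Schur function of an integer tuple, `s_{ρ'} = det (e_{ρ_i − i + j})`. -/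
def schurE {l : ℕ} (ρ : Fin l → ℤ) : Lam :=
  (Matrix.of fun i j : Fin l => eZ (ρ i - (i.1 : ℤ) + (j.1 : ℤ))).det

section Marginals

variable {ι κ : Type*} [Fintype ι] [Fintype κ]

/-- The marginals of a matrix of natural numbers: the vector of its row sums and the vector of its
column sums. -/
def marginals (A : Matrix ι κ ℕ) : (ι → ℕ) × (κ → ℕ) :=
  (fun i => ∑ j, A i j, fun j => ∑ i, A i j)

lemma le_marginals_snd (A : Matrix ι κ ℕ) (i : ι) (j : κ) : A i j ≤ (marginals A).2 j :=
  Finset.single_le_sum (f := fun i => A i j) (fun _ _ => Nat.zero_le _) (Finset.mem_univ i)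

variable [DecidableEq ι] [DecidableEq κ]

variable (ι κ) in
/-- The finite set of matrices of natural numbers all of whose entries are less than `K`. -/
def matricesLT (K : ℕ) : Finset (Matrix ι κ ℕ) :=
  Fintype.piFinset fun _ => Fintype.piFinset fun _ => Finset.range K

lemma mem_matricesLT {K : ℕ} {A : Matrix ι κ ℕ} : A ∈ matricesLT ι κ K ↔ ∀ i j, A i j < K :=
  Fintype.mem_piFinset.trans <| forall_congr' fun _ =>
    Fintype.mem_piFinset.trans <| forall_congr' fun _ => Finset.mem_range

lemma prod_one_sub_mul_sum_matricesLT {S : Type*} [CommRing S] (r : ι → κ → S) (K : ℕ) :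
    (∏ i, ∏ j, (1 - r i j)) * ∑ A ∈ matricesLT ι κ K, ∏ i, ∏ j, r i j ^ A i j =
      ∏ p : ι × κ, (1 - r p.1 p.2 ^ K) := by
  have hsum : ∑ A ∈ matricesLT ι κ K, ∏ i, ∏ j, r i j ^ A i j =
      ∏ i, ∏ j, ∑ a ∈ Finset.range K, r i j ^ a := by
    simp only [Finset.prod_univ_sum]
    rfl
  simp only [hsum, ← Finset.prod_mul_distrib, mul_neg_geom_sum, Fintype.prod_prod_type]

end Marginals

section FiberSum

variable {α β M : Type*} [AddCommMonoid M] {φ : α → β} {g : β → M} {s : Finset α}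

lemma ncard_fiber_nsmul [DecidableEq β] (hs : ∀ a, g (φ a) ≠ 0 → a ∈ s) (b : β) :
    (φ ⁻¹' {b}).ncard • g b = (s.filter (φ · = b)).card • g b := by
  by_cases hb : g b = 0
  · simp only [hb, smul_zero]
  · have hfiber : φ ⁻¹' {b} = (s.filter (φ · = b) : Finset α) := by
      ext a
      simp only [Set.mem_preimage, Set.mem_singleton_iff, Finset.coe_filter, Set.mem_ofPred_eq]
      exact ⟨fun h => ⟨hs a (h ▸ hb), h⟩, And.right⟩
    rw [hfiber, Set.ncard_coe_finset]

lemma support_ncard_fiber_nsmul_subset [DecidableEq β] (hs : ∀ a, g (φ a) ≠ 0 → a ∈ s) :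
    (Function.support fun b => (φ ⁻¹' {b}).ncard • g b) ⊆ (s.image φ : Finset β) := by
  intro b hb
  rw [Function.mem_support, ncard_fiber_nsmul hs] at hb
  have hcard : (s.filter (φ · = b)).card ≠ 0 := fun h => hb (by rw [h, zero_smul])
  obtain ⟨a, ha⟩ := Finset.card_ne_zero.1 hcard
  obtain ⟨has, rfl⟩ := Finset.mem_filter.1 ha
  exact Finset.mem_coe.2 (Finset.mem_image_of_mem φ has)

lemma finsum_ncard_fiber_nsmul (hs : ∀ a, g (φ a) ≠ 0 → a ∈ s) :
    ∑ᶠ b, (φ ⁻¹' {b}).ncard • g b = ∑ a ∈ s, g (φ a) := by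
  classical
  rw [finsum_eq_sum_of_support_subset _ (support_ncard_fiber_nsmul_subset hs), Finset.sum_comp]
  exact Finset.sum_congr rfl fun b _ => ncard_fiber_nsmul hs b

end FiberSum

section Append

lemma castAdd_ne_natAdd {m n : ℕ} (i : Fin m) (j : Fin n) : Fin.castAdd n i ≠ Fin.natAdd m j :=
  fun h => absurd (congrArg Fin.val h) (by simp only [Fin.val_castAdd, Fin.val_natAdd]; omega)

lemma append_add_append {M : Type*} [Add M] {m n : ℕ} (a c : Fin m → M) (b d : Fin n → M) :
    Fin.append a b + Fin.append c d = Fin.append (a + c) (b + d) := by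
  funext k
  refine Fin.addCases (fun i => ?_) (fun j => ?_) k <;>
    simp only [Pi.add_apply, Fin.append_left, Fin.append_right]

variable {M : Type*} [AddCommMonoid M] {m n : ℕ}

lemma sum_single_castAdd (a : Fin m → M) :
    ∑ i, Pi.single (Fin.castAdd n i) (a i) = Fin.append a (0 : Fin n → M) := by
  funext k
  refine Fin.addCases (fun i => ?_) (fun j => ?_) k <;>
    simp [Finset.sum_apply, Pi.single_apply, (castAdd_ne_natAdd _ _).symm]

lemma sum_single_natAdd (b : Fin n → M) :
    ∑ j, Pi.single (Fin.natAdd m j) (b j) = Fin.append (0 : Fin m → M) b := by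
  funext k
  refine Fin.addCases (fun i => ?_) (fun j => ?_) k <;>
    simp [Finset.sum_apply, Pi.single_apply, castAdd_ne_natAdd]

end Append

section Vandermonde

variable {S : Type*} [CommRing S]

lemma det_vandermonde_eq_prod_ite {l : ℕ} (v : Fin l → S) :
    (Matrix.vandermonde v).det = ∏ i, ∏ j, if i < j then v j - v i else 1 := by
  simp only [Matrix.det_vandermonde, ← Finset.prod_filter, Finset.filter_lt_eq_Ioi]

lemma det_vandermonde_eq_mul_prod_sub {m n : ℕ} (v : Fin (m + n) → S) :
    (Matrix.vandermonde v).det =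
      (Matrix.vandermonde fun i : Fin m => v (Fin.castAdd n i)).det *
      (Matrix.vandermonde fun j : Fin n => v (Fin.natAdd m j)).det *
      ∏ i : Fin m, ∏ j : Fin n, (v (Fin.natAdd m j) - v (Fin.castAdd n i)) := by
  have hlt (i : Fin m) (j : Fin n) : Fin.castAdd n i < Fin.natAdd m j := by
    rw [Fin.lt_def, Fin.val_castAdd, Fin.val_natAdd]
    omega
  have hcast (i i' : Fin m) : Fin.castAdd n i < Fin.castAdd n i' ↔ i < i' := Iff.rfl
  simp only [det_vandermonde_eq_prod_ite, Fin.prod_univ_add, hlt, (hlt _ _).not_gt, hcast,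
    Fin.natAdd_lt_natAdd_iff, if_true, if_false, Finset.prod_const_one,
    Finset.prod_mul_distrib]
  ring

end Vandermonde

/-- The Jacobi–Trudi determinant `det (h_{ρᵢ - i + j})` of an integer tuple, formed with an
arbitrary doubly infinite sequence `h` in place of the complete homogeneous symmetric functions. -/
def jacobiTrudi {R : Type*} [CommRing R] (h : ℤ → R) {l : ℕ} (ρ : Fin l → ℤ) : R :=
  (Matrix.of fun i j : Fin l => h (ρ i - (i : ℤ) + (j : ℤ))).det

section JacobiTrudi

variable {R : Type*} [CommRing R]

lemma jacobiTrudi_eq_sum_perm (h : ℤ → R) {l : ℕ} (ρ : Fin l → ℤ) :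
    jacobiTrudi h ρ = ∑ σ : Equiv.Perm (Fin l), Equiv.Perm.sign σ •
      ∏ i, h (ρ i - (i : ℤ) + (σ i : ℤ)) := by
  simp only [jacobiTrudi, ← Matrix.det_transpose (Matrix.of _), Matrix.det_apply,
    Matrix.transpose_apply, Matrix.of_apply]

lemma jacobiTrudi_eq_zero {h : ℤ → R} (hneg : ∀ k < 0, h k = 0) {l : ℕ} {ρ : Fin l → ℤ} (i : Fin l)
    (hi : ρ i + (l : ℤ) - 1 - (i : ℤ) < 0) : jacobiTrudi h ρ = 0 :=
  Matrix.det_eq_zero_of_row_eq_zero i fun j => hneg _ (by omega)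

end JacobiTrudi

/-- Laurent polynomials over `R` in variables indexed by `ι`, as the group ring of `ι → ℤ`. -/
abbrev MvLaurent (ι R : Type*) [CommRing R] : Type _ := AddMonoidAlgebra R (ι → ℤ)

namespace MvLaurent

variable {ι R : Type*} [CommRing R]

/-- The Laurent monomial `x^a`. -/
def monomial (a : ι → ℤ) : MvLaurent ι R := AddMonoidAlgebra.single a 1

lemma monomial_add (a b : ι → ℤ) :
    (monomial (a + b) : MvLaurent ι R) = monomial a * monomial b := by
  simp only [monomial, AddMonoidAlgebra.single_mul_single, mul_one]

lemma monomial_nsmul (k : ℕ) (a : ι → ℤ) :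
    (monomial (k • a) : MvLaurent ι R) = monomial a ^ k := by
  simp only [monomial, AddMonoidAlgebra.single_pow, one_pow]

lemma monomial_sum {α : Type*} (s : Finset α) (a : α → ι → ℤ) :
    (monomial (∑ k ∈ s, a k) : MvLaurent ι R) = ∏ k ∈ s, monomial (a k) :=
  map_prod (AddMonoidAlgebra.of R (ι → ℤ)) (fun k => Multiplicative.ofAdd (a k)) s

/-- The variable `x_i`. -/
def X [DecidableEq ι] (i : ι) : MvLaurent ι R := monomial (Pi.single i 1)

lemma X_pow [DecidableEq ι] (i : ι) (k : ℕ) :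
    (X i : MvLaurent ι R) ^ k = monomial (Pi.single i (k : ℤ)) := by
  rw [X, ← monomial_nsmul, ← Pi.single_smul, nsmul_one]

lemma det_vandermonde_X [DecidableEq ι] {l : ℕ} (e : Fin l → ι) :
    (Matrix.vandermonde fun i => (X (e i) : MvLaurent ι R)).det =
      ∑ σ : Equiv.Perm (Fin l), Equiv.Perm.sign σ •
        monomial (∑ i, Pi.single (e i) ((σ i : ℕ) : ℤ)) := by
  simp only [← Matrix.det_transpose (Matrix.vandermonde _), Matrix.det_apply,
    Matrix.transpose_apply, Matrix.vandermonde_apply, X_pow, monomial_sum]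

/-- The umbral functional `x^a ↦ ∏ᵢ h_{aᵢ}` of a doubly infinite sequence `h`. -/
def umbral [Fintype ι] (h : ℤ → R) : MvLaurent ι R →ₗ[R] R :=
  Finsupp.linearCombination R (fun a : ι → ℤ => ∏ i, h (a i)) ∘ₗ
    (AddMonoidAlgebra.coeffLinearEquiv R).toLinearMap

lemma umbral_sign_smul_monomial [Fintype ι] (h : ℤ → R) (u : ℤˣ) (a : ι → ℤ) :
    umbral h (u • monomial a) = u • ∏ i, h (a i) := by
  rw [LinearMap.map_smul_of_tower]
  simp [umbral, monomial]

variable {m n : ℕ}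

/-- The Laurent polynomial `x^{ρ-δ} V(x)`, where `δ = (0, 1, …)` and `V` is the Vandermonde
determinant. The umbral functional takes it to the Jacobi–Trudi determinant of `ρ`. -/
def schurKernel {l : ℕ} (ρ : Fin l → ℤ) : MvLaurent (Fin l) R :=
  monomial (fun i => ρ i - (i : ℤ)) * (Matrix.vandermonde X).det

lemma umbral_schurKernel (h : ℤ → R) {l : ℕ} (ρ : Fin l → ℤ) :
    umbral h (schurKernel ρ) = jacobiTrudi h ρ := by
  have hV := det_vandermonde_X (R := R) (id : Fin l → Fin l)
  simp only [id, Finset.univ_sum_single] at hV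
  rw [schurKernel, hV, jacobiTrudi_eq_sum_perm]
  simp only [Finset.mul_sum, mul_smul_comm, ← monomial_add, map_sum, umbral_sign_smul_monomial,
    Pi.add_apply]

/-- The Laurent polynomial `x^{λ-δ} y^{μ-δ} V(x) V(y)`, where `x` is the block of the first `m`
variables and `y` that of the last `n`. -/
def schurPairKernel (lam : Fin m → ℤ) (mu : Fin n → ℤ) : MvLaurent (Fin (m + n)) R :=
  monomial (Fin.append (fun i => lam i - (i : ℤ)) (fun j => mu j - (j : ℤ))) *
    ((Matrix.vandermonde fun i : Fin m => X (Fin.castAdd n i)).det *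
      (Matrix.vandermonde fun j : Fin n => X (Fin.natAdd m j)).det)

lemma umbral_schurPairKernel (h : ℤ → R) (lam : Fin m → ℤ) (mu : Fin n → ℤ) :
    umbral h (schurPairKernel lam mu) = jacobiTrudi h lam * jacobiTrudi h mu := by
  simp only [schurPairKernel, det_vandermonde_X, sum_single_castAdd, sum_single_natAdd,
    jacobiTrudi_eq_sum_perm, Finset.sum_mul_sum]
  simp only [Finset.mul_sum, smul_mul_assoc, mul_smul_comm, smul_smul, ← monomial_add,
    append_add_append, add_zero, zero_add, map_sum, umbral_sign_smul_monomial,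
    Fin.prod_univ_add, Fin.append_left, Fin.append_right, Pi.add_apply]

lemma monomial_append_mul_schurPairKernel (a lam : Fin m → ℤ) (b mu : Fin n → ℤ) :
    monomial (Fin.append a b) * schurPairKernel lam mu =
      (schurPairKernel (lam + a) (mu + b) : MvLaurent (Fin (m + n)) R) := by
  simp only [schurPairKernel, ← mul_assoc, ← monomial_add, append_add_append]
  congr 4 <;> funext <;> simp only [Pi.add_apply] <;> ring

/-- The Laurent monomial `x_i / y_j`, which acts on kernels as Young's raising operator `R_{ij}`. -/
def raising (i : Fin m) (j : Fin n) : MvLaurent (Fin (m + n)) R :=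
  monomial (Fin.append (Pi.single i 1) (-Pi.single j 1))

lemma raising_pow_mul_schurPairKernel (i : Fin m) (j : Fin n) (k : ℕ) (lam : Fin m → ℤ)
    (mu : Fin n → ℤ) :
    raising i j ^ k * schurPairKernel lam mu =
      (schurPairKernel (lam + Pi.single i (k : ℤ)) (mu - Pi.single j (k : ℤ)) :
        MvLaurent (Fin (m + n)) R) := by
  have hpow : k • Fin.append (Pi.single i 1) (-Pi.single j 1) =
      Fin.append (Pi.single i (k : ℤ)) (-Pi.single j (k : ℤ)) := by
    funext x
    refine Fin.addCases (fun i' => ?_) (fun j' => ?_) x <;> simp [Pi.single_apply]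
  rw [raising, ← monomial_nsmul, hpow, monomial_append_mul_schurPairKernel, sub_eq_add_neg]

lemma prod_raising_pow (A : Matrix (Fin m) (Fin n) ℕ) :
    ∏ i, ∏ j, (raising i j : MvLaurent (Fin (m + n)) R) ^ A i j =
      monomial (Fin.append (fun i => ((marginals A).1 i : ℤ))
        (fun j => -((marginals A).2 j : ℤ))) := by
  simp only [raising, ← monomial_nsmul, ← monomial_sum]
  congr 1
  funext x
  refine Fin.addCases (fun i => ?_) (fun j => ?_) x <;>
    simp [marginals, Finset.sum_apply, Pi.single_apply]

lemma X_natAdd_sub_X_castAdd (i : Fin m) (j : Fin n) :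
    (X (Fin.natAdd m j) - X (Fin.castAdd n i) : MvLaurent (Fin (m + n)) R) =
      X (Fin.natAdd m j) * (1 - raising i j) := by
  have hexp : (Pi.single (Fin.castAdd n i) 1 : Fin (m + n) → ℤ) =
      Pi.single (Fin.natAdd m j) 1 + Fin.append (Pi.single i 1) (-Pi.single j 1) := by
    funext x
    refine Fin.addCases (fun i' => ?_) (fun j' => ?_) x <;>
      simp [Pi.single_apply, castAdd_ne_natAdd, (castAdd_ne_natAdd _ _).symm]
  rw [mul_sub, mul_one, raising, X, X, hexp, monomial_add]

lemma prod_X_natAdd :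
    ∏ _i : Fin m, ∏ j : Fin n, (X (Fin.natAdd m j) : MvLaurent (Fin (m + n)) R) =
      monomial (Fin.append 0 fun _ => (m : ℤ)) := by
  simp only [X, ← monomial_sum, sum_single_natAdd, Finset.sum_const, Finset.card_univ,
    Fintype.card_fin]
  congr 1
  funext x
  refine Fin.addCases (fun i => ?_) (fun j => ?_) x <;> simp

lemma schurKernel_append (lam : Fin m → ℤ) (mu : Fin n → ℤ) :
    (schurKernel (Fin.append lam mu) : MvLaurent (Fin (m + n)) R) =
      (∏ i, ∏ j, (1 - raising i j)) * schurPairKernel lam mu := by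
  have hexp : (fun k : Fin (m + n) => Fin.append lam mu k - (k : ℤ)) +
      Fin.append 0 (fun _ => (m : ℤ)) =
        Fin.append (fun i => lam i - (i : ℤ)) (fun j => mu j - (j : ℤ)) := by
    funext k
    refine Fin.addCases (fun i => ?_) (fun j => ?_) k
    · simp
    · simp only [Pi.add_apply, Fin.append_right, Fin.val_natAdd, Nat.cast_add]
      ring
  rw [schurPairKernel, ← hexp, monomial_add, schurKernel, det_vandermonde_eq_mul_prod_sub]
  simp only [X_natAdd_sub_X_castAdd, Finset.prod_mul_distrib, prod_X_natAdd]
  ring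

lemma schurKernel_append_marginals (lam : Fin m → ℤ) (mu : Fin n → ℤ)
    (A : Matrix (Fin m) (Fin n) ℕ) :
    (schurKernel (Fin.append (fun i => lam i + ((marginals A).1 i : ℤ))
        (fun j => mu j - ((marginals A).2 j : ℤ))) : MvLaurent (Fin (m + n)) R) =
      (∏ i, ∏ j, (1 - raising i j)) * (∏ i, ∏ j, raising i j ^ A i j) *
        schurPairKernel lam mu := by
  rw [mul_assoc, prod_raising_pow, monomial_append_mul_schurPairKernel, schurKernel_append]
  rfl

lemma umbral_prod_one_sub_raising_pow {h : ℤ → R} (hneg : ∀ k < 0, h k = 0) (K : ℕ)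
    (s : Finset (Fin m × Fin n)) (lam : Fin m → ℤ) (mu : Fin n → ℤ)
    (hK : ∀ j, mu j + (n : ℤ) - 1 - (j : ℤ) < K) :
    umbral h ((∏ p ∈ s, (1 - raising p.1 p.2 ^ K)) * schurPairKernel lam mu) =
      jacobiTrudi h lam * jacobiTrudi h mu := by
  induction s using Finset.induction_on generalizing lam mu with
  | empty => rw [Finset.prod_empty, one_mul, umbral_schurPairKernel]
  | insert p s hp ih =>
    obtain ⟨i, j⟩ := p
    have hlowered : jacobiTrudi h (mu - Pi.single j (K : ℤ)) = 0 :=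
      jacobiTrudi_eq_zero hneg j <| by
        rw [Pi.sub_apply, Pi.single_eq_same]
        linarith [hK j]
    have hK' (j' : Fin n) :
        (mu - Pi.single j (K : ℤ) : Fin n → ℤ) j' + (n : ℤ) - 1 - (j' : ℤ) < K := by
      have hnonneg : (0 : Fin n → ℤ) ≤ Pi.single j (K : ℤ) :=
        Pi.single_nonneg.2 (Nat.cast_nonneg K)
      rw [Pi.sub_apply]
      linarith [hK j', hnonneg j', Pi.zero_apply (M := fun _ : Fin n => ℤ) j']
    rw [Finset.prod_insert hp, mul_comm (1 - _), mul_assoc, sub_mul, one_mul,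
      raising_pow_mul_schurPairKernel, mul_sub, map_sub, ih lam mu hK, ih _ _ hK', hlowered,
      mul_zero, sub_zero]

end MvLaurent

section Product

open MvLaurent

variable {R : Type*} [CommRing R] {m n : ℕ}

lemma jacobiTrudi_mul_jacobiTrudi {h : ℤ → R} (hneg : ∀ k < 0, h k = 0) (lam : Fin m → ℤ)
    (mu : Fin n → ℤ) {K : ℕ} (hK : ∀ j, mu j + (n : ℤ) - 1 - (j : ℤ) < K) :
    jacobiTrudi h lam * jacobiTrudi h mu = ∑ A ∈ matricesLT (Fin m) (Fin n) K,
      jacobiTrudi h (Fin.append (fun i => lam i + ((marginals A).1 i : ℤ))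
        (fun j => mu j - ((marginals A).2 j : ℤ))) := by
  rw [← umbral_prod_one_sub_raising_pow hneg K Finset.univ lam mu hK,
    ← prod_one_sub_mul_sum_matricesLT, Finset.mul_sum, Finset.sum_mul, map_sum]
  simp only [← schurKernel_append_marginals, umbral_schurKernel]

lemma jacobiTrudi_append_eq_zero {h : ℤ → R} (hneg : ∀ k < 0, h k = 0) (a : Fin m → ℤ)
    {b : Fin n → ℤ} (j : Fin n) (hj : b j + (n : ℤ) - 1 - (j : ℤ) < 0) :
    jacobiTrudi h (Fin.append a b) = 0 :=
  jacobiTrudi_eq_zero hneg (Fin.natAdd m j) <| by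
    rw [Fin.append_right, Fin.val_natAdd]
    omega

theorem littlewood_richardson_integral_matrix_general {h : ℤ → R} (hneg : ∀ k < 0, h k = 0)
    (lam : Fin m → ℤ) (mu : Fin n → ℤ) :
    let f : ((Fin m → ℕ) × (Fin n → ℕ)) → R := fun MN =>
      (Set.ncard {A : Matrix (Fin m) (Fin n) ℕ |
          (∀ i, ∑ j, A i j = MN.1 i) ∧ (∀ j, ∑ i, A i j = MN.2 j)}) •
        jacobiTrudi h (Fin.append (fun i => lam i + (MN.1 i : ℤ)) (fun j => mu j - (MN.2 j : ℤ)))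
    (Function.support f).Finite ∧
    jacobiTrudi h lam * jacobiTrudi h mu = ∑ᶠ MN, f MN ∧
    ∀ MN : (Fin m → ℕ) × (Fin n → ℕ),
      (∃ j : Fin n, mu j + (n : ℤ) - 1 - (j : ℤ) < (MN.2 j : ℤ)) → f MN = 0 := by
  intro f
  let g (MN : (Fin m → ℕ) × (Fin n → ℕ)) : R :=
    jacobiTrudi h (Fin.append (fun i => lam i + (MN.1 i : ℤ)) (fun j => mu j - (MN.2 j : ℤ)))
  have hf : f = fun MN => (marginals ⁻¹' {MN}).ncard • g MN := by
    simp only [f, g, Set.preimage, Set.mem_singleton_iff, marginals, Prod.ext_iff, funext_iff]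
  have hg (MN : (Fin m → ℕ) × (Fin n → ℕ)) (j : Fin n)
      (hj : mu j + (n : ℤ) - 1 - (j : ℤ) < MN.2 j) : g MN = 0 :=
    jacobiTrudi_append_eq_zero hneg _ j (by linarith)
  obtain ⟨B, hB⟩ := Set.finite_range (fun j : Fin n => mu j + (n : ℤ) - 1 - (j : ℤ)) |>.bddAbove
  have hK (j : Fin n) : mu j + (n : ℤ) - 1 - (j : ℤ) < ((B + 1).toNat : ℤ) :=
    (hB ⟨j, rfl⟩).trans_lt (by omega)
  have hbox (A) (hA : g (marginals A) ≠ 0) : A ∈ matricesLT (Fin m) (Fin n) (B + 1).toNat :=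
    mem_matricesLT.2 fun i j => lt_of_not_ge fun hle => hA <| hg _ j <|
      (hK j).trans_le (Nat.cast_le.2 (hle.trans (le_marginals_snd A i j)))
  refine ⟨?_, ?_, fun MN ⟨j, hj⟩ => by rw [hf]; simp only [hg MN j hj, smul_zero]⟩
  · exact hf ▸ (Finset.finite_toSet _).subset (support_ncard_fiber_nsmul_subset hbox)
  · rw [hf, finsum_ncard_fiber_nsmul hbox, jacobiTrudi_mul_jacobiTrudi hneg lam mu hK]

end Product

lemma hZ_eq_zero_of_neg (k : ℤ) (hk : k < 0) : hZ k = 0 := if_neg hk.not_ge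

lemma schur_eq_jacobiTrudi {l : ℕ} (ρ : Fin l → ℤ) : schur ρ = jacobiTrudi hZ ρ := rfl

/-- the Littlewood–Richardson rule in integral-matrix form.  For partitions
`λ = (λ₁ ≥ … ≥ λ_m ≥ 0)` and `μ = (μ₁ ≥ … ≥ μ_n ≥ 0)`:
`s_λ · s_μ = ∑_{M,N} C_{M,N} · s_{(λ+M, μ−N)}`, the sum ranging over all pairs
`M ∈ ℕ^m`, `N ∈ ℕ^n`, where `C_{M,N}` is the number of `m×n` matrices with nonnegative
integer entries with row sums `M` and column sums `N`, and `(λ+M, μ−N) ∈ ℤ^{m+n}` is the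
juxtaposed tuple.  All but finitely many summands vanish; in fact every summand with
`N_j > μ_j + n − j` for some `j` is zero. -/
theorem littlewood_richardson_integral_matrix (m n : ℕ)
    (lam : Fin m → ℕ) (mu : Fin n → ℕ) (hlam : Antitone lam) (hmu : Antitone mu) :
    let f : ((Fin m → ℕ) × (Fin n → ℕ)) → Lam := fun MN =>
      ((Set.ncard {A : Matrix (Fin m) (Fin n) ℕ |
          (∀ i, ∑ j, A i j = MN.1 i) ∧ (∀ j, ∑ i, A i j = MN.2 j)} : ℚ)) •
        schur (Fin.append (fun i => (lam i : ℤ) + (MN.1 i : ℤ))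
          (fun j => (mu j : ℤ) - (MN.2 j : ℤ)))
    (Function.support f).Finite ∧
    schur (fun i => (lam i : ℤ)) * schur (fun j => (mu j : ℤ)) = (∑ᶠ MN, f MN) ∧
    ∀ MN : (Fin m → ℕ) × (Fin n → ℕ),
      (∃ j : Fin n, (mu j : ℤ) + (n : ℤ) - 1 - (j.1 : ℤ) < (MN.2 j : ℤ)) → f MN = 0 := by
  simpa only [Nat.cast_smul_eq_nsmul, schur_eq_jacobiTrudi] using
    littlewood_richardson_integral_matrix_general hZ_eq_zero_of_neg (lam ·) (mu ·)
end
end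

section
/- The components of the Drinfeld currents satisfy the quadratic (Serre-type) relations: for all m, n ∈ ℤ and both choices of sign, as F-linear endomorphisms of W_i (i ∈ {0,1}): X_m^± X_n^± − q^{±2} X_n^± X_m^± = q^{±2} X_{m−1}^± X_{n+1}^± − X_{n+1}^± X_{m−1}^±. -/
open MvPolynomial

noncomputable section

/-- The base field `F = ℚ(q)`. -/
abbrev Fq : Type := RatFunc ℚ

/-- The indeterminate `q ∈ ℚ(q)`. -/
def qq : Fq := RatFunc.X

/-- `Λ_F = F[p₁,p₂,…]`, with the variable `X n` (for `n : ℕ+`) the power sum `p_n`. -/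
abbrev LamF : Type := MvPolynomial ℕ+ Fq

/-- The power sum `p_n`. -/
def ppF (n : ℕ+) : LamF := X n

/-- The family `g` with generating function `∑_k g_k t^k = exp (∑_{n≥1} c n · p_n tⁿ/n)`,
characterized by `g 0 = 1` and the recursion obtained by differentiating:
`(k+1) · g (k+1) = ∑_{i=0}^{k} c (i+1) · p_{i+1} · g (k−i)`. -/
def genFamF (c : ℕ → Fq) : ℕ → LamF
  | 0 => 1
  | (k+1) => (((k : Fq) + 1)⁻¹) •
      ∑ i ∈ Finset.range (k+1), c (i+1) • (ppF ⟨i+1, Nat.succ_pos i⟩ * genFamF c (k - i))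
  decreasing_by exact Nat.lt_succ_of_le (Nat.sub_le k i)

/-- The complete homogeneous symmetric function `h_k`. -/
def hhF : ℕ → LamF := genFamF fun _ => 1

/-- The elementary symmetric function `e_k`. -/
def eeF : ℕ → LamF := genFamF fun n => (-1)^(n+1)

/-- `h` indexed by `ℤ` (zero in negative degrees). -/
def hZF (n : ℤ) : LamF := if 0 ≤ n then hhF n.toNat else 0

/-- `e` indexed by `ℤ` (zero in negative degrees). -/
def eZF (n : ℤ) : LamF := if 0 ≤ n then eeF n.toNat else 0

/-- The creation coefficients of `X⁺(z)`:
`exp (∑ ((1+q^{2n})q^{−n}/n)·p_n·zⁿ) = ∑_k HpF k · z^k`. -/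
def HpF : ℕ → LamF := genFamF fun n => (1 + qq ^ (2*n)) * (qq⁻¹) ^ n

/-- `HpF` indexed by `ℤ`. -/
def HZp (n : ℤ) : LamF := if 0 ≤ n then HpF n.toNat else 0

/-- The annihilation avatars for `X⁺(z)`: since
`(1+q^{2n})q^{−n}/n · a_n = q^{−n}·∂/∂p_n`, the coefficient of `z^{−j}` in
`exp (−∑ ((1+q^{2n})q^{−n}/n)·a_n·z^{−n})` is `ApF j` with `p_i ↦ i·∂/∂p_i`
substituted, where `∑_k ApF k t^k = exp (−∑ q^{−n} p_n tⁿ/n)`. -/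
def ApF : ℕ → LamF := genFamF fun n => -((qq⁻¹) ^ n)

/-- The creation coefficients of `X⁻(z)`:
`exp (−∑ ((1+q^{2n})/n)·p_n·zⁿ) = ∑_k HmF k · z^k`. -/
def HmF : ℕ → LamF := genFamF fun n => -(1 + qq ^ (2*n))

/-- `HmF` indexed by `ℤ`. -/
def HZm (n : ℤ) : LamF := if 0 ≤ n then HmF n.toNat else 0

/-- The differential operator `∏_i (i·∂/∂p_i)^(α i)`. -/
def monOpF (α : ℕ+ →₀ ℕ) : Module.End Fq LamF :=
  ((α.support.sort (· ≤ ·)).map fun (i : ℕ+) =>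
    (((i : ℕ) : Fq) • (pderiv i).toLinearMap) ^ (α i)).prod

/-- `f(∂) P`: substitute `p_i ↦ i·∂/∂p_i` in `f` and apply to `P`. -/
def DopF (f : LamF) (P : LamF) : LamF := ∑ α ∈ f.support, f.coeff α • monOpF α P

/-- Bound for the weighted degree of `P` (weight of `p_i` is `i`). -/
def wboundF (P : LamF) : ℕ := P.support.sup fun α => α.sum fun i k => (i : ℕ) * k

/-- The level-one Fock space `W_i = Λ_F ⊗ F[ℤα]e^{iα/2}`, realized as `ℤ →₀ Λ_F`;
`Finsupp.single m P` represents `P·e^{mα}e^{iα/2}`. -/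
abbrev W : Type := ℤ →₀ LamF

/-- The Drinfeld current component `X_n^+` on `W_i` (the parameter `i ∈ {0,1}` enters
through `z^∂ e^{mα}e^{iα/2} = z^{2m+i} e^{mα}e^{iα/2}`): the coefficient of `z^{−n−1}` in
`X⁺(z) = exp(∑((1+q^{2n})q^{−n}/n)a_{−n}zⁿ)·exp(−∑((1+q^{2n})q^{−n}/n)a_n z^{−n})·e^α z^∂`,
i.e. `X_n^+(P·e^{mα}) = ∑_j HpF_{j−n−1−2m−i} · (ApF j)(∂) P · e^{(m+1)α}`
(only the finitely many `j ≤ wboundF P` contribute). -/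
def Xp (i n : ℤ) (w : W) : W :=
  w.sum fun m P => Finsupp.single (m+1)
    (∑ j ∈ Finset.range (wboundF P + 1),
      HZp ((j : ℤ) - n - 1 - 2*m - i) * DopF (ApF j) P)

/-- The Drinfeld current component `X_n^-` on `W_i`: the coefficient of `z^{−n−1}` in
`X⁻(z) = exp(−∑((1+q^{2n})/n)a_{−n}zⁿ)·exp(∑((1+q^{2n})/n)a_n z^{−n})·e^{−α} z^{−∂}`,
i.e. `X_n^-(P·e^{mα}) = ∑_j HmF_{j+2m+i−n−1} · h_j(∂) P · e^{(m−1)α}`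
(here `(1+q^{2n})/n · a_n = ∂/∂p_n`, whose generating family is `h`). -/
def Xm (i n : ℤ) (w : W) : W :=
  w.sum fun m P => Finsupp.single (m-1)
    (∑ j ∈ Finset.range (wboundF P + 1),
      HZm ((j : ℤ) + 2*m + i - n - 1) * DopF (hhF j) P)

/-- The `q`-factorial `[r]! = ∏_{k=1}^r (q^k − q^{−k})/(q − q^{−1})`. -/
def qfact (r : ℕ) : Fq := ∏ k ∈ Finset.range r, (qq ^ (k+1) - (qq⁻¹) ^ (k+1)) / (qq - qq⁻¹)

/-- The divided power `x^{(r)} = x^r / [r]!` of an operator on `W`. -/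
def divpow (f : W → W) (r : ℕ) (w : W) : W := (qfact r)⁻¹ • (f^[r] w)

/-- Schur function of an integer tuple: `s_ρ = det (h_{ρ_i − i + j})`. -/
def schurF {l : ℕ} (ρ : Fin l → ℤ) : LamF :=
  (Matrix.of fun i j : Fin l => hZF (ρ i - (i.1 : ℤ) + (j.1 : ℤ))).det

/-- Dual Schur function of an integer tuple: `s_{ρ'} = det (e_{ρ_i − i + j})`. -/
def schurEF {l : ℕ} (ρ : Fin l → ℤ) : LamF :=
  (Matrix.of fun i j : Fin l => eZF (ρ i - (i.1 : ℤ) + (j.1 : ℤ))).det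

/-- `q^{±∂}`: `q^{ε∂}(P·e^{mα}e^{iα/2}) = q^{ε(2m+i)}·P·e^{mα}e^{iα/2}`. -/
def qd (i ε : ℤ) (w : W) : W := w.sum fun m P => Finsupp.single m (qq ^ (ε * (2*m + i)) • P)

/-- The Chevalley generator `e₁ = X₀⁺`. -/
def che1 (i : ℤ) : W → W := Xp i 0
/-- The Chevalley generator `f₁ = X₀⁻`. -/
def chf1 (i : ℤ) : W → W := Xm i 0
/-- The Chevalley generator `e₀ = X₁⁻ ∘ q^{−∂}`. -/
def che0 (i : ℤ) (w : W) : W := Xm i 1 (qd i (-1) w)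
/-- The Chevalley generator `f₀ = q^∂ ∘ X₋₁⁺`. -/
def chf0 (i : ℤ) (w : W) : W := qd i 1 (Xp i (-1) w)

/-!
A component `V_a` of a current is the coefficient of `z^{-a}` in `E(z) T(z⁻¹)`. Here
`E(z) = exp (∑ c_n p_n zⁿ / n)` acts by multiplication, and `T(u) = exp (∑ d_n uⁿ ∂/∂p_n)` is, by
Taylor's formula, the translation `p_n ↦ p_n + d_n uⁿ`, hence an algebra homomorphism. It multiplies
`E(w)` by `exp (∑ c_n d_n (uw)ⁿ / n)`, which is `(1 - uw)(1 - s uw)` because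
`c_n d_n = -(1 + sⁿ)` with `s = q^{∓2}`. Therefore
`V_a V_b = N(a, b) - (1 + s) N(a - 1, b + 1) + s N(a - 2, b + 2)`, where `N(a, b)` is the
coefficient of `z^{-a} w^{-b}` in the normally ordered product `E(z) E(w) T(z⁻¹) T(w⁻¹)`. As `N` is
symmetric, the quadratic relation with factor `s⁻¹` becomes a linear identity between values of `N`.

Identities between exponentials are proved by comparing the first-order linear differential
equations they satisfy: a solution is determined by its constant coefficient.
-/

open scoped Polynomial PowerSeries

/-! ### Power series -/

section PowerSeries

variable {R S : Type*} [CommRing R] [CommRing S]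

lemma powerSeries_eq_of_derivative_eq [IsAddTorsionFree R] {a b f g : R⟦X⟧}
    (hf : d⁄dX R f = a * f + b) (hg : d⁄dX R g = a * g + b)
    (h₀ : PowerSeries.constantCoeff f = PowerSeries.constantCoeff g) : f = g := by
  have hfg : d⁄dX R (f - g) = a * (f - g) := by rw [map_sub, hf, hg]; ring
  suffices ∀ n, PowerSeries.coeff n (f - g) = 0 by
    ext n
    simpa [sub_eq_zero] using this n
  intro n
  induction n using Nat.strong_induction_on with
  | _ n ih =>
    cases n with
    | zero => simp [h₀]
    | succ n =>
      have hn : (n + 1) • PowerSeries.coeff (n + 1) (f - g) = 0 := by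
        rw [nsmul_eq_mul, mul_comm, Nat.cast_succ, ← PowerSeries.coeff_derivative, hfg,
          PowerSeries.coeff_mul]
        refine Finset.sum_eq_zero fun x hx => ?_
        have hx := Finset.HasAntidiagonal.mem_antidiagonal.mp hx
        rw [ih x.2 (by omega), mul_zero]
      exact (smul_eq_zero_iff_right n.succ_ne_zero).mp hn

lemma powerSeries_derivative_map (φ : R →+* S) (f : R⟦X⟧) :
    d⁄dX S (PowerSeries.map φ f) = PowerSeries.map φ (d⁄dX R f) := by
  ext n
  simp [PowerSeries.coeff_derivative]

lemma powerSeries_map_eq_mul_map_of_derivative_eq [IsAddTorsionFree S] {φ ψ : R →+* S} {a E : R⟦X⟧}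
    {b Q : S⟦X⟧} (hE₀ : PowerSeries.constantCoeff E = 1) (hQ₀ : PowerSeries.constantCoeff Q = 1)
    (hE : d⁄dX R E = a * E) (hQ : d⁄dX S Q = b * Q) (hab : a.map φ = b + a.map ψ) :
    E.map φ = Q * E.map ψ := by
  refine powerSeries_eq_of_derivative_eq (a := a.map φ) (b := 0) ?_ ?_ ?_
  · rw [powerSeries_derivative_map, hE, map_mul, add_zero]
  · rw [Derivation.leibniz, powerSeries_derivative_map, hE, hQ, hab, map_mul, smul_eq_mul,
      smul_eq_mul]
    ring
  · rw [map_mul, hQ₀]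
    simp [← PowerSeries.coeff_zero_eq_constantCoeff_apply, hE₀]

lemma mk_pow_succ_mul_one_sub (a : R) :
    PowerSeries.mk (fun n => a ^ (n + 1)) * (1 - PowerSeries.C a * PowerSeries.X)
      = PowerSeries.C a := by
  ext (_ | n)
  · simp
  · simp [mul_sub, ← mul_assoc, mul_comm _ (PowerSeries.C a), pow_succ']

lemma derivative_one_sub_mul_one_sub (u v : R) :
    d⁄dX R ((1 - PowerSeries.C u * PowerSeries.X) * (1 - PowerSeries.C v * PowerSeries.X))
      = PowerSeries.mk (fun n => -(u ^ (n + 1) + v ^ (n + 1)))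
        * ((1 - PowerSeries.C u * PowerSeries.X) * (1 - PowerSeries.C v * PowerSeries.X)) := by
  have hmk : PowerSeries.mk (fun n => -(u ^ (n + 1) + v ^ (n + 1)))
      = -(PowerSeries.mk (fun n => u ^ (n + 1)) + PowerSeries.mk fun n => v ^ (n + 1)) := rfl
  simp only [hmk, map_sub, Derivation.leibniz, smul_eq_mul, PowerSeries.derivative_C,
    PowerSeries.derivative_X, Derivation.map_one_eq_zero]
  linear_combination
    (1 - PowerSeries.C v * PowerSeries.X) * mk_pow_succ_mul_one_sub u
    + (1 - PowerSeries.C u * PowerSeries.X) * mk_pow_succ_mul_one_sub v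

/-- `D` applied to every coefficient of a power series. -/
def coeffwiseDerivation {A : Type*} [CommRing A] [Algebra R A] (D : Derivation R A A) :
    Derivation R A⟦X⟧ A⟦X⟧ :=
  Derivation.mk'
    { toFun := fun f => PowerSeries.mk fun n => D (PowerSeries.coeff n f)
      map_add' := fun f g => by ext; simp
      map_smul' := fun r f => by ext; simp }
    fun f g => by
      ext n
      simp only [LinearMap.coe_mk, AddHom.coe_mk, smul_eq_mul, map_add, PowerSeries.coeff_mk,
        PowerSeries.coeff_mul, map_sum, Derivation.leibniz, Finset.sum_add_distrib]
      congr 1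
      exact Finset.Nat.sum_antidiagonal_swap
        (f := fun x => PowerSeries.coeff x.1 g * D (PowerSeries.coeff x.2 f))

lemma coeff_coeffwiseDerivation {A : Type*} [CommRing A] [Algebra R A] (D : Derivation R A A)
    (f : A⟦X⟧) (n : ℕ) :
    PowerSeries.coeff n (coeffwiseDerivation D f) = D (PowerSeries.coeff n f) :=
  PowerSeries.coeff_mk n fun n => D (PowerSeries.coeff n f)

lemma derivative_coeffwiseDerivation {A : Type*} [CommRing A] [Algebra R A]
    (D : Derivation R A A) (f : A⟦X⟧) :
    d⁄dX A (coeffwiseDerivation D f) = coeffwiseDerivation D (d⁄dX A f) := by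
  ext n
  simp [PowerSeries.coeff_derivative, coeff_coeffwiseDerivation, mul_comm]

/-- The `k`-th coefficient of a power series for `k : ℤ`, zero in negative degrees. -/
def intCoeff (k : ℤ) : R⟦X⟧ →ₗ[R] R := if 0 ≤ k then PowerSeries.coeff k.toNat else 0

lemma intCoeff_natCast (n : ℕ) (f : R⟦X⟧) : intCoeff n f = PowerSeries.coeff n f := by
  simp [intCoeff]

lemma intCoeff_of_neg {k : ℤ} (hk : k < 0) (f : R⟦X⟧) : intCoeff k f = 0 := by
  simp [intCoeff, hk.not_ge]

lemma intCoeff_C_mul (k : ℤ) (a : R) (f : R⟦X⟧) :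
    intCoeff k (PowerSeries.C a * f) = a * intCoeff k f := by
  rw [← PowerSeries.smul_eq_C_mul, map_smul, smul_eq_mul]

lemma intCoeff_X_mul (k : ℤ) (f : R⟦X⟧) :
    intCoeff k (PowerSeries.X * f) = intCoeff (k - 1) f := by
  obtain ⟨_ | n, rfl⟩ | hk : (∃ n : ℕ, k = n) ∨ k < 0 := by
    rcases lt_or_ge k 0 with hk | hk
    · exact .inr hk
    · exact .inl (Int.eq_ofNat_of_zero_le hk)
  · rw [intCoeff_natCast, intCoeff_of_neg (by simp), PowerSeries.coeff_zero_X_mul]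
  · rw [show ((n + 1 : ℕ) : ℤ) - 1 = n by simp, intCoeff_natCast, intCoeff_natCast,
      PowerSeries.coeff_succ_X_mul]
  · rw [intCoeff_of_neg hk, intCoeff_of_neg (by omega)]

lemma intCoeff_map (φ : R →+* S) (k : ℤ) (f : R⟦X⟧) :
    intCoeff k (PowerSeries.map φ f) = φ (intCoeff k f) := by
  unfold intCoeff
  split_ifs <;> simp

end PowerSeries

/-! ### Vertex operators -/

section VertexOperator

variable {K R : Type*} [CommRing K] [CommRing R] [Algebra K R]

/-- The coefficient of `z^{-a}` in `E(z) f(z⁻¹)`. -/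
def crossCoeff (E : R⟦X⟧) (a : ℤ) : R[X] →ₗ[R] R :=
  Polynomial.lsum fun j => LinearMap.toSpanSingleton R R (intCoeff (j - a) E)

lemma crossCoeff_eq_sum_range (E : R⟦X⟧) (a : ℤ) {f : R[X]} {M : ℕ} (hM : f.natDegree < M) :
    crossCoeff E a f = ∑ j ∈ Finset.range M, f.coeff j * intCoeff (j - a) E :=
  Polynomial.sum_over_range' f (by simp) M hM

lemma crossCoeff_C_mul (E : R⟦X⟧) (a : ℤ) (r : R) (f : R[X]) :
    crossCoeff E a (Polynomial.C r * f) = r * crossCoeff E a f := by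
  rw [← Polynomial.smul_eq_C_mul, map_smul, smul_eq_mul]

lemma crossCoeff_X_mul (E : R⟦X⟧) (a : ℤ) (f : R[X]) :
    crossCoeff E a (Polynomial.X * f) = crossCoeff E (a - 1) f := by
  have hf : f.natDegree < f.natDegree + 1 := Nat.lt_succ_self _
  rw [crossCoeff_eq_sum_range E (a - 1) hf, crossCoeff_eq_sum_range E a (M := f.natDegree + 2)
    ((Polynomial.natDegree_mul_le_of_le Polynomial.natDegree_X_le le_rfl).trans_lt (by omega)),
    Finset.sum_range_succ']
  simp [sub_sub_eq_add_sub]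

/-- The coefficient `V_a` of `z^{-a}` in the vertex operator `E(z) T(z⁻¹)`, composed of the
multiplication by the creation series `E` and the annihilation series `T`. -/
def vertexOp (E : R⟦X⟧) (T : R →ₐ[K] R[X]) (a : ℤ) : R →ₗ[K] R :=
  (crossCoeff E a).restrictScalars K ∘ₗ T.toLinearMap

lemma vertexOp_apply (E : R⟦X⟧) (T : R →ₐ[K] R[X]) (a : ℤ) (P : R) :
    vertexOp E T a P = crossCoeff E a (T P) := rfl

/-- The operators `P ↦ (T P).coeff j`, i.e. the coefficients of the annihilation series `T`,
commute with each other. -/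
def HasCommutingCoeffs (T : R →ₐ[K] R[X]) : Prop :=
  ∀ P j l, (T ((T P).coeff j)).coeff l = (T ((T P).coeff l)).coeff j

/-- The coefficient of `z^{-a} w^{-b}` in the normally ordered product
`E(z) E(w) T(z⁻¹) T(w⁻¹)`. -/
def normalOrdered (E : R⟦X⟧) (T : R →ₐ[K] R[X]) (P : R) (a b : ℤ) : R :=
  (T P).sum fun l x => intCoeff (l - b) E * crossCoeff E a (T x)

lemma normalOrdered_symm (E : R⟦X⟧) (T : R →ₐ[K] R[X])
    (hT : HasCommutingCoeffs T) (P : R) (a b : ℤ) :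
    normalOrdered E T P a b = normalOrdered E T P b a := by
  set M := (T P).natDegree + 1 with hM
  have hdeg (l : ℕ) : (T ((T P).coeff l)).natDegree < M := by
    rw [hM, Nat.lt_succ_iff, Polynomial.natDegree_le_iff_coeff_eq_zero]
    intro j hj
    rw [hT, Polynomial.coeff_eq_zero_of_natDegree_lt hj, map_zero, Polynomial.coeff_zero]
  have hsum (a b : ℤ) : normalOrdered E T P a b = ∑ l ∈ Finset.range M, ∑ j ∈ Finset.range M,
      intCoeff (l - b) E * ((T ((T P).coeff l)).coeff j * intCoeff (j - a) E) := by
    rw [normalOrdered, Polynomial.sum_over_range' _ (by simp) M (Nat.lt_succ_self _)]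
    simp only [crossCoeff_eq_sum_range E a (hdeg _), Finset.mul_sum]
  rw [hsum, hsum, Finset.sum_comm]
  refine Finset.sum_congr rfl fun j _ => Finset.sum_congr rfl fun l _ => ?_
  rw [hT]
  ring

/-- Moving the annihilation series past the creation series produces the factor
`(1 - uw)(1 - s uw)`, with `u` the polynomial and `w` the power series variable. -/
def HasQuadraticExchange (E : R⟦X⟧) (T : R →ₐ[K] R[X]) (s : K) : Prop :=
  E.map (T : R →+* R[X]) =
    (1 - PowerSeries.C Polynomial.X * PowerSeries.X) *
      (1 - PowerSeries.C (s • Polynomial.X) * PowerSeries.X) * E.map Polynomial.C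

variable {E : R⟦X⟧} {T : R →ₐ[K] R[X]} {s : K}

lemma HasQuadraticExchange.map_intCoeff (h : HasQuadraticExchange E T s) (k : ℤ) :
    T (intCoeff k E) = Polynomial.C (intCoeff k E)
      - (1 + s) • (Polynomial.X * Polynomial.C (intCoeff (k - 1) E))
      + s • (Polynomial.X * (Polynomial.X * Polynomial.C (intCoeff (k - 2) E))) := by
  have hk := congrArg (intCoeff k) h
  have hexp (u v G : R[X]⟦X⟧) : (1 - u * PowerSeries.X) * (1 - v * PowerSeries.X) * G
      = G - (u + v) * (PowerSeries.X * G) + u * v * (PowerSeries.X * (PowerSeries.X * G)) := by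
    ring
  rw [hexp, ← map_add, ← map_mul, map_add, map_sub] at hk
  simp only [intCoeff_C_mul, intCoeff_X_mul, intCoeff_map, sub_sub, one_add_one_eq_two] at hk
  simp only [RingHom.coe_coe] at hk
  rw [hk]
  simp only [add_mul, smul_mul_assoc, mul_smul_comm, add_smul, one_smul, mul_assoc]

lemma HasQuadraticExchange.vertexOp_vertexOp (h : HasQuadraticExchange E T s) (P : R) (a b : ℤ) :
    vertexOp E T a (vertexOp E T b P) = normalOrdered E T P a b
      - (1 + s) • normalOrdered E T P (a - 1) (b + 1)
      + s • normalOrdered E T P (a - 2) (b + 2) := by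
  have hterm (l : ℕ) (x : R) : vertexOp E T a (x * intCoeff (l - b) E)
      = intCoeff (l - b) E * crossCoeff E a (T x)
        - (1 + s) • (intCoeff (l - (b + 1)) E * crossCoeff E (a - 1) (T x))
        + s • (intCoeff (l - (b + 2)) E * crossCoeff E (a - 2) (T x)) := by
    have hX (y : R) : T x * (Polynomial.X * Polynomial.C y)
        = Polynomial.C y * (Polynomial.X * T x) := by ring
    have hXX (y : R) : T x * (Polynomial.X * (Polynomial.X * Polynomial.C y))
        = Polynomial.C y * (Polynomial.X * (Polynomial.X * T x)) := by ring
    rw [vertexOp_apply, map_mul, h.map_intCoeff, mul_add, mul_sub, mul_smul_comm, mul_smul_comm,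
      hX, hXX, mul_comm (T x), map_add, map_sub, LinearMap.map_smul_of_tower,
      LinearMap.map_smul_of_tower]
    simp only [crossCoeff_C_mul, crossCoeff_X_mul, sub_sub, one_add_one_eq_two]
  simp only [normalOrdered, Polynomial.sum_def, Finset.smul_sum, ← Finset.sum_sub_distrib,
    ← Finset.sum_add_distrib, ← hterm, ← map_sum]
  rfl

lemma HasQuadraticExchange.vertexOp_quadratic (h : HasQuadraticExchange E T s)
    (hT : HasCommutingCoeffs T) {t : K} (hts : t * s = 1) (a b : ℤ) (P : R) :
    vertexOp E T (a + 2) (vertexOp E T b P) - t • vertexOp E T (b + 2) (vertexOp E T a P)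
      = t • vertexOp E T (a + 1) (vertexOp E T (b + 1) P)
        - vertexOp E T (b + 3) (vertexOp E T (a - 1) P) := by
  simp only [h.vertexOp_vertexOp]
  set N := normalOrdered E T P
  have hN : ∀ x y, N x y = N y x := normalOrdered_symm E T hT P
  rw [show a + 2 - 1 = a + 1 by ring, show a + 2 - 2 = a by ring,
    show b + 2 - 1 = b + 1 by ring, show b + 2 - 2 = b by ring,
    show a + 1 - 1 = a by ring, show a + 1 - 2 = a - 1 by ring,
    show b + 1 + 1 = b + 2 by ring, show b + 1 + 2 = b + 3 by ring,
    show b + 3 - 1 = b + 2 by ring, show b + 3 - 2 = b + 1 by ring,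
    show a - 1 + 1 = a by ring, show a - 1 + 2 = a + 1 by ring,
    hN (b + 2) a, hN (b + 1) (a + 1), hN b (a + 2), hN (b + 3) (a - 1)]
  linear_combination (norm := module) hts •
    (N (a + 1) (b + 1) + N a (b + 2) - N (a + 2) b - N (a - 1) (b + 3))

end VertexOperator

section Current

variable {K R : Type*} [CommRing K] [CommRing R] [Algebra K R]

/-- The coefficient of `z^{-n-1}` in the current `E(z) T(z⁻¹) e^{εα} z^{ε∂}` on
`R ⊗ K[ℤ]e^{iα/2}`, where `Finsupp.single m P` represents `P e^{mα}e^{iα/2}`.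
The sign `ε` selects `X⁺` or `X⁻`. -/
def current (E : R⟦X⟧) (T : R →ₐ[K] R[X]) (ε i n : ℤ) : (ℤ →₀ R) →ₗ[K] (ℤ →₀ R) :=
  Finsupp.lsum K fun m =>
    Finsupp.lsingle (m + ε) ∘ₗ vertexOp E T (n + 1 + ε * (2 * m + i))

lemma current_single (E : R⟦X⟧) (T : R →ₐ[K] R[X]) (ε i n m : ℤ) (P : R) :
    current E T ε i n (Finsupp.single m P)
      = Finsupp.single (m + ε) (vertexOp E T (n + 1 + ε * (2 * m + i)) P) := by
  simp [current]

lemma HasQuadraticExchange.current_quadratic {E : R⟦X⟧} {T : R →ₐ[K] R[X]} {s t : K}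
    (h : HasQuadraticExchange E T s) (hT : HasCommutingCoeffs T) (hts : t * s = 1) {ε : ℤ}
    (hε : ε * ε = 1) (i m n : ℤ) (w : ℤ →₀ R) :
    current E T ε i m (current E T ε i n w) - t • current E T ε i n (current E T ε i m w)
      = t • current E T ε i (m - 1) (current E T ε i (n + 1) w)
        - current E T ε i (n + 1) (current E T ε i (m - 1) w) := by
  induction w using Finsupp.induction_linear with
  | zero => simp
  | add v w hv hw =>
    simp only [map_add, smul_add]
    linear_combination (norm := module) hv + hw
  | single k P =>
    have hindex (l : ℤ) : l + 1 + ε * (2 * (k + ε) + i) = l + 1 + ε * (2 * k + i) + 2 := by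
      linear_combination 2 * hε
    simp only [current_single, hindex, Finsupp.smul_single, ← Finsupp.single_sub]
    set x := ε * (2 * k + i)
    rw [show m - 1 + 1 + x + 2 = m + 1 + x + 1 by ring, show m - 1 + 1 + x = m + 1 + x - 1 by ring,
      show n + 1 + 1 + x + 2 = n + 1 + x + 3 by ring, show n + 1 + 1 + x = n + 1 + x + 1 by ring,
      h.vertexOp_quadratic hT hts]

end Current

/-! ### Differential operators with constant coefficients -/

section DiffOp

variable {σ K : Type*} [CommRing K]

lemma pderiv_commute (i j : σ) :
    Commute (pderiv i : Derivation K (MvPolynomial σ K) (MvPolynomial σ K)).toLinearMap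
      (pderiv j : Derivation K (MvPolynomial σ K) (MvPolynomial σ K)).toLinearMap := by
  classical
  have hcomm : ⁅(pderiv i : Derivation K (MvPolynomial σ K) (MvPolynomial σ K)),
      (pderiv j : Derivation K (MvPolynomial σ K) (MvPolynomial σ K))⁆ = 0 := by
    ext k
    rw [Derivation.commutator_apply]
    simp [pderiv_X, Pi.single_apply, apply_ite]
  rw [Commute, SemiconjBy, ← sub_eq_zero, ← Ring.lie_def, ← Derivation.commutator_coe_linear_map,
    hcomm, Derivation.coe_zero_linearMap]

open scoped IsMulCommutative in
lemma exists_algHom_apply_X_eq {A : Type*} [Ring A] [Algebra K A] {D : σ → A}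
    (hD : ∀ i j, Commute (D i) (D j)) :
    ∃ φ : MvPolynomial σ K →ₐ[K] A, ∀ i, φ (X i) = D i := by
  have hrange : ∀ a ∈ Set.range D, ∀ b ∈ Set.range D, a * b = b * a := by
    rintro _ ⟨i, rfl⟩ _ ⟨j, rfl⟩
    exact hD i j
  have := Algebra.isMulCommutative_adjoin K hrange
  let D' (i : σ) : Algebra.adjoin K (Set.range D) := ⟨D i, Algebra.subset_adjoin ⟨i, rfl⟩⟩
  exact ⟨(Algebra.adjoin K (Set.range D)).val.comp (aeval D'), fun i => by simp [D']⟩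

lemma exists_diffOp (a : σ → K) :
    ∃ φ : MvPolynomial σ K →ₐ[K] Module.End K (MvPolynomial σ K),
      ∀ i, φ (X i) = a i • (pderiv i).toLinearMap :=
  exists_algHom_apply_X_eq fun i j => ((pderiv_commute i j).smul_left _).smul_right _

/-- The differential operator `f(a₁∂₁, a₂∂₂, …)`, as an algebra homomorphism in `f`. -/
def diffOp (a : σ → K) : MvPolynomial σ K →ₐ[K] Module.End K (MvPolynomial σ K) :=
  (exists_diffOp a).choose

lemma diffOp_X (a : σ → K) (i : σ) : diffOp a (X i) = a i • (pderiv i).toLinearMap :=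
  (exists_diffOp a).choose_spec i

lemma diffOp_mul_X_apply (a : σ → K) (f P : MvPolynomial σ K) (i : σ) :
    diffOp a (f * X i) P = diffOp a f (a i • pderiv i P) := by
  simp [diffOp_X]

lemma diffOp_C (a : σ → K) (f : MvPolynomial σ K) (r : K) :
    diffOp a f (C r) = C (constantCoeff f * r) := by
  induction f using MvPolynomial.induction_on with
  | C s =>
    rw [← algebraMap_eq, AlgHom.commutes, Module.algebraMap_end_apply, algebraMap_eq,
      constantCoeff_C, smul_eq_C_mul, C_mul]
  | add f g hf hg => simp [hf, hg, add_mul]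
  | mul_X f i _ => rw [diffOp_mul_X_apply]; simp

lemma diffOp_X_mul (a : σ → K) (f P : MvPolynomial σ K) (i : σ) :
    diffOp a f (X i * P) = X i * diffOp a f P + diffOp a (a i • pderiv i f) P := by
  induction f using MvPolynomial.induction_on generalizing P with
  | C s => simp [← algebraMap_eq, Module.algebraMap_end_apply]
  | add f g hf hg =>
    simp only [map_add, LinearMap.add_apply, hf, hg, smul_add]
    ring
  | mul_X f j hf =>
    classical
    have hswap : diffOp a (X j * pderiv i f) P = diffOp a (pderiv i f) (a j • pderiv j P) := by
      rw [mul_comm, diffOp_mul_X_apply]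
    simp only [diffOp_mul_X_apply, Derivation.leibniz, pderiv_X, smul_eq_mul, smul_add, map_add,
      LinearMap.add_apply, map_smul, LinearMap.smul_apply, hswap]
    rcases eq_or_ne i j with rfl | hij
    · simp only [hf, Pi.single_eq_same, mul_one, map_smul, LinearMap.smul_apply,
        mul_smul_comm]
      module
    · simp only [hf, Pi.single_eq_of_ne hij, Pi.single_eq_of_ne hij.symm, mul_zero, map_zero,
        map_smul, LinearMap.smul_apply, LinearMap.zero_apply, mul_smul_comm]
      module

lemma diffOp_monomial [LinearOrder σ] (a : σ → K) (α : σ →₀ ℕ) (r : K) :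
    diffOp a (monomial α r) = r • ((α.support.sort (· ≤ ·)).map fun i =>
      (a i • (pderiv i).toLinearMap : Module.End K (MvPolynomial σ K)) ^ α i).prod := by
  have hmon : monomial α r
      = r • ((α.support.sort (· ≤ ·)).map fun i => (X i : MvPolynomial σ K) ^ α i).prod := by
    rw [← Multiset.prod_coe, ← Multiset.map_coe, Finset.sort_eq, monomial_eq, smul_eq_C_mul]
    rfl
  rw [hmon, map_smul, map_list_prod, List.map_map]
  congr 3
  funext i
  simp [diffOp_X]

end DiffOp

/-! ### Exponentials of power sums -/

section ExpPowerSum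

variable {K : Type*} [CommRing K]

/-- `E = exp (∑_{n ≥ 1} c n · p_n zⁿ / n)` as a power series in `z`, where `p_n = X n`;
characterized by its logarithmic derivative. -/
structure IsExpPowerSum (c : ℕ+ → K) (E : (MvPolynomial ℕ+ K)⟦X⟧) : Prop where
  constantCoeff_eq : PowerSeries.constantCoeff E = 1
  derivative_eq : d⁄dX _ E = PowerSeries.mk (fun n => c n.succPNat • X n.succPNat) * E

/-- The translation `p_n ↦ p_n + d n · uⁿ`. -/
def translation (d : ℕ+ → K) : MvPolynomial ℕ+ K →ₐ[K] (MvPolynomial ℕ+ K)[X] :=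
  aeval fun n => Polynomial.C (X n) + d n • Polynomial.X ^ (n : ℕ)

lemma translation_X (d : ℕ+ → K) (n : ℕ+) :
    translation d (X n) = Polynomial.C (X n) + d n • Polynomial.X ^ (n : ℕ) :=
  aeval_X _ _

lemma natDegree_translation_le (d : ℕ+ → K) (P : MvPolynomial ℕ+ K) :
    (translation d P).natDegree ≤ weightedTotalDegree (fun n : ℕ+ => (n : ℕ)) P := by
  rw [translation, aeval_def, eval₂_eq]
  refine Polynomial.natDegree_sum_le_of_forall_le _ _ fun α hα => ?_
  refine le_trans ?_ (le_weightedTotalDegree _ hα)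
  rw [Finsupp.weight_apply, Finsupp.sum]
  refine (Polynomial.natDegree_C_mul_le _ _).trans ((Polynomial.natDegree_prod_le _ _).trans ?_)
  refine Finset.sum_le_sum fun n _ => Polynomial.natDegree_pow_le_of_le _ ?_
  refine Polynomial.natDegree_add_le_of_degree_le (by simp) ?_
  exact (Polynomial.natDegree_smul_le _ _).trans (Polynomial.natDegree_X_pow_le _)

variable [IsDomain K] [CharZero K] {c d : ℕ+ → K} {E : (MvPolynomial ℕ+ K)⟦X⟧}

lemma IsExpPowerSum.hasQuadraticExchange (hE : IsExpPowerSum c E) {s : K}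
    (hcd : ∀ n, c n * d n = -(1 + s ^ (n : ℕ))) :
    HasQuadraticExchange E (translation d) s := by
  refine powerSeries_map_eq_mul_map_of_derivative_eq hE.constantCoeff_eq (by simp) hE.derivative_eq
    (derivative_one_sub_mul_one_sub _ _) ?_
  ext1 n
  simp only [PowerSeries.coeff_map, PowerSeries.coeff_mk, map_add, RingHom.coe_coe, map_smul,
    translation_X, smul_add, smul_smul, hcd, Polynomial.smul_C, Nat.succPNat_coe,
    Nat.succ_eq_add_one, smul_pow]
  module

lemma IsExpPowerSum.constantCoeff_coeff (hE : IsExpPowerSum c E) (k : ℕ) :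
    constantCoeff (PowerSeries.coeff k E) = if k = 0 then 1 else 0 := by
  have hmap : E.map constantCoeff = 1 := by
    refine powerSeries_eq_of_derivative_eq (a := 0) (b := 0) ?_ (by simp) ?_
    · rw [powerSeries_derivative_map, hE.derivative_eq, map_mul, add_zero]
      congr 1
      ext n
      simp
    · rw [← PowerSeries.coeff_zero_eq_constantCoeff_apply, PowerSeries.coeff_map,
        PowerSeries.coeff_zero_eq_constantCoeff_apply, hE.constantCoeff_eq, map_one, map_one]
  rw [← PowerSeries.coeff_map, hmap, PowerSeries.coeff_one]

lemma IsExpPowerSum.coeffwiseDerivation_smul_pderiv (hE : IsExpPowerSum c E) (n : ℕ+) :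
    coeffwiseDerivation ((n : K) • pderiv n) E
      = PowerSeries.C (C (c n)) * PowerSeries.X ^ (n : ℕ) * E := by
  set A := PowerSeries.mk fun k => c k.succPNat • (X k.succPNat : MvPolynomial ℕ+ K) with hA
  set B : (MvPolynomial ℕ+ K)⟦X⟧ := PowerSeries.C (C (c n)) * PowerSeries.X ^ (n : ℕ) with hB
  have hAB : coeffwiseDerivation ((n : K) • pderiv n) A = d⁄dX _ B := by
    ext1 k
    rw [coeff_coeffwiseDerivation, PowerSeries.coeff_derivative, hA, hB, PowerSeries.coeff_mk,
      PowerSeries.coeff_C_mul, PowerSeries.coeff_X_pow, Derivation.smul_apply, Derivation.map_smul,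
      pderiv_X]
    rcases eq_or_ne n k.succPNat with rfl | hn
    · simp [smul_eq_C_mul, mul_comm]
    · have hk : k + 1 ≠ n := fun hk => hn (PNat.eq hk.symm)
      simp [hk, hn]
  refine powerSeries_eq_of_derivative_eq (a := A) (b := E * d⁄dX _ B) ?_ ?_ ?_
  · rw [derivative_coeffwiseDerivation, hE.derivative_eq, Derivation.leibniz, hAB, smul_eq_mul,
      smul_eq_mul]
  · rw [Derivation.leibniz, hE.derivative_eq, smul_eq_mul, smul_eq_mul]
    ring
  · rw [← PowerSeries.coeff_zero_eq_constantCoeff_apply, coeff_coeffwiseDerivation,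
      PowerSeries.coeff_zero_eq_constantCoeff_apply, hE.constantCoeff_eq]
    simp [hB]

-- Taylor's formula for `exp (∑ d n · uⁿ ∂/∂p_n)`.
lemma IsExpPowerSum.diffOp_coeff_apply (hE : IsExpPowerSum d E) (k : ℕ)
    (P : MvPolynomial ℕ+ K) :
    diffOp (fun n : ℕ+ => (n : K)) (PowerSeries.coeff k E) P = (translation d P).coeff k := by
  have hderiv (n : ℕ+) (k : ℕ) : (n : K) • pderiv n (PowerSeries.coeff k E)
      = d n • PowerSeries.coeff k (PowerSeries.X ^ (n : ℕ) * E) := by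
    rw [← Derivation.smul_apply, ← coeff_coeffwiseDerivation, hE.coeffwiseDerivation_smul_pderiv,
      mul_assoc, PowerSeries.coeff_C_mul, smul_eq_C_mul]
  induction P using MvPolynomial.induction_on generalizing k with
  | C r =>
    rw [diffOp_C, hE.constantCoeff_coeff, ← algebraMap_eq, AlgHom.commutes]
    rw [Polynomial.algebraMap_apply, Polynomial.coeff_C, algebraMap_eq]
    split_ifs <;> simp
  | add P Q hP hQ => rw [map_add, hP, hQ, map_add, Polynomial.coeff_add]
  | mul_X P n hP =>
    rw [mul_comm P, diffOp_X_mul, hderiv, map_smul, map_mul (translation d), translation_X, add_mul,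
      Polynomial.coeff_add, Polynomial.coeff_C_mul, hP, smul_mul_assoc, Polynomial.coeff_smul,
      PowerSeries.coeff_X_pow_mul', Polynomial.coeff_X_pow_mul']
    split_ifs <;> simp [hP]

lemma IsExpPowerSum.hasCommutingCoeffs (hE : IsExpPowerSum d E) :
    HasCommutingCoeffs (translation d) := by
  intro P j l
  simp only [← hE.diffOp_coeff_apply, ← Module.End.mul_apply, ← map_mul, mul_comm]

end ExpPowerSum

/-! ### The Drinfeld currents -/

lemma isExpPowerSum_genFamF (c : ℕ → Fq) :
    IsExpPowerSum (fun n : ℕ+ => c n) (PowerSeries.mk (genFamF c)) where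
  constantCoeff_eq := by
    rw [← PowerSeries.coeff_zero_eq_constantCoeff_apply, PowerSeries.coeff_mk, genFamF]
  derivative_eq := by
    ext1 k
    have hk : (k : Fq) + 1 ≠ 0 := Nat.cast_add_one_ne_zero k
    rw [PowerSeries.coeff_derivative, PowerSeries.coeff_mk, PowerSeries.coeff_mul,
      Finset.Nat.sum_antidiagonal_eq_sum_range_succ_mk, genFamF, smul_mul_assoc, mul_comm]
    have hcast : (k : LamF) + 1 = C ((k : Fq) + 1) := by simp
    rw [hcast, ← smul_eq_C_mul, inv_smul_smul₀ hk]
    simp only [PowerSeries.coeff_mk, smul_mul_assoc]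
    rfl

lemma DopF_eq_diffOp (f P : LamF) : DopF f P = diffOp (fun n : ℕ+ => ((n : ℕ) : Fq)) f P := by
  conv_rhs => rw [f.as_sum, map_sum]
  simp only [DopF, monOpF, diffOp_monomial, LinearMap.sum_apply, LinearMap.smul_apply]

lemma wboundF_eq_weightedTotalDegree (P : LamF) :
    wboundF P = weightedTotalDegree (fun n : ℕ+ => (n : ℕ)) P := by
  simp [wboundF, weightedTotalDegree, Finsupp.weight_apply, mul_comm]

lemma vertexOp_genFamF (c d : ℕ → Fq) (a : ℤ) (P : LamF) :
    vertexOp (PowerSeries.mk (genFamF c)) (translation fun n : ℕ+ => d n) a P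
      = ∑ j ∈ Finset.range (wboundF P + 1),
        (if 0 ≤ (j : ℤ) - a then genFamF c ((j : ℤ) - a).toNat else 0) * DopF (genFamF d j) P := by
  have hdeg : (translation (fun n : ℕ+ => d n) P).natDegree < wboundF P + 1 := by
    rw [wboundF_eq_weightedTotalDegree, Nat.lt_succ_iff]
    exact natDegree_translation_le _ P
  rw [vertexOp_apply, crossCoeff_eq_sum_range _ a hdeg]
  refine Finset.sum_congr rfl fun j _ => ?_
  rw [DopF_eq_diffOp, ← PowerSeries.coeff_mk j (genFamF d),
    (isExpPowerSum_genFamF d).diffOp_coeff_apply, mul_comm, intCoeff]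
  split_ifs <;> simp

/-- The current with creation series `exp (∑ c n · p_n zⁿ / n)` and annihilation series
`exp (∑ d n · ∂/∂p_n z⁻ⁿ)`. -/
def expCurrent (c d : ℕ → Fq) (ε i n : ℤ) : W →ₗ[Fq] W :=
  current (PowerSeries.mk (genFamF c)) (translation fun n : ℕ+ => d n) ε i n

lemma expCurrent_apply (c d : ℕ → Fq) (ε i n : ℤ) (w : W) :
    expCurrent c d ε i n w = w.sum fun m P => Finsupp.single (m + ε)
      (∑ j ∈ Finset.range (wboundF P + 1),
        (if 0 ≤ (j : ℤ) - (n + 1 + ε * (2 * m + i))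
          then genFamF c ((j : ℤ) - (n + 1 + ε * (2 * m + i))).toNat else 0)
        * DopF (genFamF d j) P) := by
  rw [expCurrent, current, Finsupp.lsum_apply]
  refine Finsupp.sum_congr fun m _ => ?_
  rw [LinearMap.comp_apply, vertexOp_genFamF, Finsupp.lsingle_apply]

lemma expCurrent_quadratic {c d : ℕ → Fq} {s t : Fq} (hcd : ∀ n, c n * d n = -(1 + s ^ n))
    (hts : t * s = 1) {ε : ℤ} (hε : ε * ε = 1) (i m n : ℤ) (w : W) :
    expCurrent c d ε i m (expCurrent c d ε i n w)
        - t • expCurrent c d ε i n (expCurrent c d ε i m w)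
      = t • expCurrent c d ε i (m - 1) (expCurrent c d ε i (n + 1) w)
        - expCurrent c d ε i (n + 1) (expCurrent c d ε i (m - 1) w) :=
  ((isExpPowerSum_genFamF c).hasQuadraticExchange fun n => hcd n).current_quadratic
    (isExpPowerSum_genFamF d).hasCommutingCoeffs hts hε i m n w

lemma Xp_eq_expCurrent (i n : ℤ) (w : W) :
    Xp i n w = expCurrent (fun n => (1 + qq ^ (2 * n)) * (qq⁻¹) ^ n) (fun n => -((qq⁻¹) ^ n))
      1 i n w := by
  have hindex (j m : ℤ) : j - (n + 1 + 1 * (2 * m + i)) = j - n - 1 - 2 * m - i := by ring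
  simp only [expCurrent_apply, hindex]
  rfl

lemma Xm_eq_expCurrent (i n : ℤ) (w : W) :
    Xm i n w = expCurrent (fun n => -(1 + qq ^ (2 * n))) (fun _ => 1) (-1) i n w := by
  have hindex (j m : ℤ) : j - (n + 1 + -1 * (2 * m + i)) = j + 2 * m + i - n - 1 := by ring
  simp only [expCurrent_apply, hindex]
  rfl

theorem drinfeld_serre_relations_general (i m n : ℤ) (w : W) :
    (Xp i m (Xp i n w) - qq ^ 2 • Xp i n (Xp i m w)
      = qq ^ 2 • Xp i (m-1) (Xp i (n+1) w) - Xp i (n+1) (Xp i (m-1) w)) ∧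
    (Xm i m (Xm i n w) - (qq⁻¹) ^ 2 • Xm i n (Xm i m w)
      = (qq⁻¹) ^ 2 • Xm i (m-1) (Xm i (n+1) w) - Xm i (n+1) (Xm i (m-1) w)) := by
  have hqq : qq ≠ 0 := RatFunc.X_ne_zero
  simp only [Xp_eq_expCurrent, Xm_eq_expCurrent]
  constructor
  · refine expCurrent_quadratic (s := (qq⁻¹) ^ 2) (fun k => ?_) (by field_simp) (by norm_num) ..
    simp only [inv_pow]
    field_simp
    ring
  · refine expCurrent_quadratic (s := qq ^ 2) (fun k => ?_) (by field_simp) (by norm_num) ..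
    ring

/-- the components of the Drinfeld currents satisfy the quadratic
(Serre-type) relations: for all `m, n ∈ ℤ` and both choices of sign, as `F`-linear
endomorphisms of `W_i` (`i ∈ {0,1}`), stated pointwise:
`X_m^± X_n^± − q^{±2} X_n^± X_m^± = q^{±2} X_{m−1}^± X_{n+1}^± − X_{n+1}^± X_{m−1}^±`. -/
theorem drinfeld_serre_relations (i : ℤ) (hi : i = 0 ∨ i = 1) (m n : ℤ) (w : W) :
    (Xp i m (Xp i n w) - qq ^ 2 • Xp i n (Xp i m w)
      = qq ^ 2 • Xp i (m-1) (Xp i (n+1) w) - Xp i (n+1) (Xp i (m-1) w)) ∧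
    (Xm i m (Xm i n w) - (qq⁻¹) ^ 2 • Xm i n (Xm i m w)
      = (qq⁻¹) ^ 2 • Xm i (m-1) (Xm i (n+1) w) - Xm i (n+1) (Xm i (m-1) w)) :=
  drinfeld_serre_relations_general i m n w
end
end
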